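/- In a plane triangulation H with outer 4-cycle C = u,v,x,y, any proper 4-coloring of the 4-cycle C in which u and x receive the same color extends to a proper 5-coloring of H. -/

import Mathlib

open SimpleGraph

/-- A closed walk is chordless (induced) if every adjacency of `G` between vertices of
the walk is an edge of the walk. -/
def WalkChordless {V : Type} {G : SimpleGraph V} {x : V} (c : G.Walk x x) : Prop :=
  ∀ ⦃a b : V⦄, a ∈ c.support → b ∈ c.support → G.Adj a b → s(a, b) ∈ c.edges

/-- Distance (in `ℕ∞`, `⊤` if unreachable) from a set of vertices to a vertex. -/
noncomputable def setDist {V : Type} (G : SimpleGraph V) (A : Set V) (v : V) : ℕ∞ :=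
  sInf {n : ℕ∞ | ∃ a ∈ A, ∃ p : G.Walk a v, (p.length : ℕ∞) = n}

/-- Distance (in `ℕ∞`) between two sets of vertices. -/
noncomputable def setSetDist {V : Type} (G : SimpleGraph V) (A B : Set V) : ℕ∞ :=
  sInf {n : ℕ∞ | ∃ a ∈ A, ∃ b ∈ B, ∃ p : G.Walk a b, (p.length : ℕ∞) = n}

/-- `K` is a minor of `H`: disjoint nonempty connected branch sets joined as in `K`. -/
def HasGraphMinor {W W' : Type} (H : SimpleGraph W) (K : SimpleGraph W') : Prop :=
  ∃ f : W' → Set W,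
    (∀ i, (f i).Nonempty) ∧ (∀ i, (H.induce (f i)).Connected) ∧
    (Pairwise fun i j => Disjoint (f i) (f j)) ∧
    (∀ ⦃i j : W'⦄, K.Adj i j → ∃ a ∈ f i, ∃ b ∈ f j, H.Adj a b)

/-- Planarity via Wagner's theorem: no `K₅` and no `K₃,₃` minor. -/
def IsPlanar {W : Type} (H : SimpleGraph W) : Prop :=
  ¬ HasGraphMinor H (completeGraph (Fin 5)) ∧
  ¬ HasGraphMinor H (completeBipartiteGraph (Fin 3) (Fin 3))

/-- Abstract data of a 2-cell embedding of a simple graph `G` in a surface: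
Euler genus, orientability, contractibility/homotopy of closed walks, faces,
sidedness, local left/right neighbours along walks, and interiors of
contractible cycles. -/
structure SurfaceEmbedding {V : Type} (G : SimpleGraph V) where
  eulerGenus : ℕ
  orientable : Prop
  IsCellular : Prop
  IsTriangulation : Prop
  Contractible : ∀ ⦃x : V⦄, G.Walk x x → Prop
  TwoSided : ∀ ⦃x : V⦄, G.Walk x x → Prop
  Homotopic : ∀ ⦃x y : V⦄, G.Walk x x → G.Walk y y → Prop
  BoundsFace : ∀ ⦃x : V⦄, G.Walk x x → Prop
  rightAt : ∀ ⦃a b : V⦄, G.Walk a b → V → Set V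
  leftAt : ∀ ⦃a b : V⦄, G.Walk a b → V → Set V
  rightAt_adj : ∀ ⦃a b : V⦄ (p : G.Walk a b) (v u : V), u ∈ rightAt p v → G.Adj v u
  leftAt_adj : ∀ ⦃a b : V⦄ (p : G.Walk a b) (v u : V), u ∈ leftAt p v → G.Adj v u
  Inside : ∀ ⦃x : V⦄, G.Walk x x → Set V

namespace SurfaceEmbedding

variable {V : Type} {G : SimpleGraph V}

/-- A noncontractible cycle of the embedding. -/
def IsNCCycle (emb : SurfaceEmbedding G) {x : V} (c : G.Walk x x) : Prop :=
  c.IsCycle ∧ ¬ emb.Contractible c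

/-- The width (edge-width) of the embedding: length of a shortest noncontractible cycle. -/
noncomputable def width (emb : SurfaceEmbedding G) : ℕ∞ :=
  sInf {n : ℕ∞ | ∃ (x : V) (c : G.Walk x x), emb.IsNCCycle c ∧ (c.length : ℕ∞) = n}

/-- `c` is a shortest noncontractible cycle. -/
def IsShortestNC (emb : SurfaceEmbedding G) {x : V} (c : G.Walk x x) : Prop :=
  emb.IsNCCycle c ∧ ∀ ⦃y : V⦄ (e : G.Walk y y), emb.IsNCCycle e → c.length ≤ e.length

/-- A witness of length `n` for `ncdist`: either a noncontractible cycle meeting `c`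
in exactly one vertex, or a path with both ends on `c`, interior disjoint from `c`,
forming a noncontractible cycle with every arc of `c` between its endpoints. -/
def IsNCDistWitness (emb : SurfaceEmbedding G) {x : V} (c : G.Walk x x) (n : ℕ) : Prop :=
  (∃ (a : V) (P : G.Walk a a), a ∈ c.support ∧ P.IsCycle ∧
      (∀ v ∈ P.support, v ∈ c.support → v = a) ∧ ¬ emb.Contractible P ∧ P.length = n) ∨
  (∃ (a b : V) (P : G.Walk a b), a ≠ b ∧ a ∈ c.support ∧ b ∈ c.support ∧ P.IsPath ∧
      (∀ v ∈ P.support, v ∈ c.support → v = a ∨ v = b) ∧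
      (∀ Q : G.Walk b a, Q.IsPath → Q.edges ⊆ c.edges → ¬ emb.Contractible (P.append Q)) ∧
      P.length = n)

/-- `ncdist` of a cycle: minimum length of an `ncdist` witness (`⊤` if none exists). -/
noncomputable def ncdist (emb : SurfaceEmbedding G) {x : V} (c : G.Walk x x) : ℕ∞ :=
  sInf {n : ℕ∞ | ∃ m : ℕ, emb.IsNCDistWitness c m ∧ (m : ℕ∞) = n}

/-- Right neighbours of a walk. -/
def RightNbrs (emb : SurfaceEmbedding G) {a b : V} (p : G.Walk a b) : Set V :=
  {u | ∃ v ∈ p.support, u ∈ emb.rightAt p v}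

/-- Left neighbours of a walk. -/
def LeftNbrs (emb : SurfaceEmbedding G) {a b : V} (p : G.Walk a b) : Set V :=
  {u | ∃ v ∈ p.support, u ∈ emb.leftAt p v}

/-- `R^k(C)`: vertices at distance exactly `k` from `C` reached by a shortest path
whose first edge leaves `C` to the right. -/
def Rlevel (emb : SurfaceEmbedding G) {x : V} (c : G.Walk x x) (k : ℕ) : Set V :=
  {v | setDist G {w | w ∈ c.support} v = (k : ℕ∞) ∧
    ∃ u ∈ c.support, ∃ p : G.Walk u v, p.IsPath ∧ p.length = k ∧
      p.getVert 1 ∈ emb.RightNbrs c}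

/-- `L^k(C)`: vertices at distance exactly `k` from `C` reached by a shortest path
whose first edge leaves `C` to the left. -/
def Llevel (emb : SurfaceEmbedding G) {x : V} (c : G.Walk x x) (k : ℕ) : Set V :=
  {v | setDist G {w | w ∈ c.support} v = (k : ℕ∞) ∧
    ∃ u ∈ c.support, ∃ p : G.Walk u v, p.IsPath ∧ p.length = k ∧
      p.getVert 1 ∈ emb.LeftNbrs c}

/-- The `k`-th canonical cycle of `x`: a contractible cycle `D` with `x` inside, all
of whose vertices are at distance exactly `k` from `x`, joined to `x` by paths of
length `k` inside the closed disk bounded by `D`. -/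
def IsCanonicalCycle (emb : SurfaceEmbedding G) (x : V) (k : ℕ) {y : V}
    (D : G.Walk y y) : Prop :=
  D.IsCycle ∧ emb.Contractible D ∧ x ∈ emb.Inside D ∧
  (∀ z ∈ D.support, G.dist x z = k) ∧
  (∀ z ∈ D.support, ∃ p : G.Walk x z, p.length = k ∧
     ∀ v ∈ p.support, v ∈ emb.Inside D ∨ v ∈ D.support)

/-- The result of cutting the embedded graph `G` along a chordless noncontractible
cycle `C` and capping with apex vertices: a new embedded graph `G'` together with
the projection back to `G` (apex vertices project to `none`). -/
structure Cutting (emb : SurfaceEmbedding G) {x : V} (C : G.Walk x x) where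
  V' : Type
  G' : SimpleGraph V'
  emb' : SurfaceEmbedding G'
  proj : V' → Option V
  proj_edge : ∀ ⦃a b : V'⦄, G'.Adj a b → ∀ u v : V,
    proj a = some u → proj b = some v → G.Adj u v
  tri : emb.IsTriangulation → emb'.IsTriangulation

/-- Cutting along a 2-sided cycle yields two apex vertices, one for each side. -/
structure TwoSidedCutting (emb : SurfaceEmbedding G) {x : V} (C : G.Walk x x)
    extends Cutting emb C where
  apexR : toCutting.V'
  apexL : toCutting.V'
  apexR_proj : toCutting.proj apexR = none
  apexL_proj : toCutting.proj apexL = none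
  apex_ne : apexR ≠ apexL

/-- A 6-shortcut for a cycle `C`: a path `P` of length 6 with both ends on `C`,
together with an arc `A` of `C`, so that `P.append A` is a noncontractible cycle
homotopic to `C`. -/
structure SixShortcut (emb : SurfaceEmbedding G) {x : V} (C : G.Walk x x) where
  a : V
  b : V
  P : G.Walk a b
  A : G.Walk b a
  P_len : P.length = 6
  P_path : P.IsPath
  ha : a ∈ C.support
  hb : b ∈ C.support
  arc_sub : A.edges ⊆ C.edges
  arc_path : A.IsPath
  cyc : (P.append A).IsCycle
  noncontr : ¬ emb.Contractible (P.append A)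
  homot : emb.Homotopic (P.append A) C

/-- The cycle `C'` produced by a 6-shortcut. -/
def SixShortcut.newCycle {emb : SurfaceEmbedding G} {x : V} {C : G.Walk x x}
    (s : SixShortcut emb C) : G.Walk s.a s.a := s.P.append s.A

/-- A 6-shortcut is optimal if the resulting cycle is as short as possible. -/
def SixShortcut.IsOptimal {emb : SurfaceEmbedding G} {x : V} {C : G.Walk x x}
    (s : SixShortcut emb C) : Prop :=
  ∀ t : SixShortcut emb C, s.newCycle.length ≤ t.newCycle.length

/-- A contractible 4-cycle bounds two triangular faces sharing a diagonal. -/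
def IsDoubleTriangle (emb : SurfaceEmbedding G) {y : V} (D : G.Walk y y) : Prop :=
  ∃ (a c : V), G.Adj a c ∧ a ∈ D.support ∧ c ∈ D.support ∧ s(a, c) ∉ D.edges ∧
    ∃ (T₁ T₂ : G.Walk a a), T₁.IsCycle ∧ T₂.IsCycle ∧ T₁.length = 3 ∧ T₂.length = 3 ∧
      emb.BoundsFace T₁ ∧ emb.BoundsFace T₂ ∧ s(a, c) ∈ T₁.edges ∧ s(a, c) ∈ T₂.edges ∧
      (∀ v ∈ T₁.support, v ∈ D.support) ∧ (∀ v ∈ T₂.support, v ∈ D.support) ∧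
      (∀ e ∈ D.edges, e ∈ T₁.edges ∨ e ∈ T₂.edges)

/-- A 4-cycle is the first neighbour circuit of a vertex of degree 4. -/
def IsFirstNbrCircuit (emb : SurfaceEmbedding G) {y : V} (D : G.Walk y y) : Prop :=
  ∃ v : V, (G.neighborSet v).ncard = 4 ∧ G.neighborSet v = {w | w ∈ D.support} ∧
    v ∈ emb.Inside D

/-- The induced subgraph on `U` is orderly: every contractible 3-cycle in `U` bounds
a face, and every contractible 4-cycle in `U` bounds two triangles sharing an edge
or is the first neighbour circuit of a vertex of degree 4. -/
def Orderly (emb : SurfaceEmbedding G) (U : Set V) : Prop :=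
  (∀ ⦃y : V⦄ (D : G.Walk y y), D.IsCycle → (∀ v ∈ D.support, v ∈ U) → D.length = 3 →
      emb.Contractible D → emb.BoundsFace D) ∧
  (∀ ⦃y : V⦄ (D : G.Walk y y), D.IsCycle → (∀ v ∈ D.support, v ∈ U) → D.length = 4 →
      emb.Contractible D → emb.IsDoubleTriangle D ∨ emb.IsFirstNbrCircuit D)

/-- A witness for `ctdist` of a 2-sided cycle `C`: a path (or cycle) with both ends
on `C`, interior disjoint from `C`, starting with an edge on one side of `C` and
ending with an edge on the other side. -/
def IsCrossWitness (emb : SurfaceEmbedding G) {x : V} (C : G.Walk x x)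
    {a b : V} (P : G.Walk a b) : Prop :=
  a ∈ C.support ∧ b ∈ C.support ∧ 1 ≤ P.length ∧
  (∀ v ∈ P.support, v ∈ C.support → v = a ∨ v = b) ∧
  ((P.getVert 1 ∈ emb.RightNbrs C ∧ P.getVert (P.length - 1) ∈ emb.LeftNbrs C) ∨
   (P.getVert 1 ∈ emb.LeftNbrs C ∧ P.getVert (P.length - 1) ∈ emb.RightNbrs C)) ∧
  (∀ h : a = b, (P.copy rfl h.symm).IsCycle) ∧ (a ≠ b → P.IsPath)

/-- `ctdist` of a 2-sided cycle: minimum length of a side-crossing witness. -/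
noncomputable def ctdist (emb : SurfaceEmbedding G) {x : V} (C : G.Walk x x) : ℕ∞ :=
  sInf {n : ℕ∞ | ∃ (a b : V) (P : G.Walk a b),
    emb.IsCrossWitness C P ∧ (P.length : ℕ∞) = n}

end SurfaceEmbedding

/-- The graph obtained from `H` by identifying the vertex `x` with the vertex `u`. -/
def mergeVerts {W : Type} [DecidableEq W] (H : SimpleGraph W) (u x : W) :
    SimpleGraph W :=
  SimpleGraph.fromRel fun a b =>
    ∃ p q : W, H.Adj p q ∧ (if p = x then u else p) = a ∧ (if q = x then u else q) = b

/-! ### Working notion of a `K₅` minor -/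

namespace K5Aux

/-- One step of `G` inside the set `A`. -/
def Step {V : Type} (G : SimpleGraph V) (A : Set V) (p q : V) : Prop :=
  G.Adj p q ∧ p ∈ A ∧ q ∈ A

/-- `A` is connected in `G` (possibly empty). -/
def Conn {V : Type} (G : SimpleGraph V) (A : Set V) : Prop :=
  ∀ p ∈ A, ∀ q ∈ A, Relation.ReflTransGen (Step G A) p q

/-- A `K₅` model. -/
def Model {V : Type} (G : SimpleGraph V) : Prop :=
  ∃ f : Fin 5 → Set V, (∀ i, Conn G (f i)) ∧
    (∀ i j, i ≠ j → Disjoint (f i) (f j)) ∧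
    (∀ i j, i < j → ∃ a ∈ f i, ∃ b ∈ f j, G.Adj a b)

theorem Model.minor {V : Type} {G : SimpleGraph V} (h : Model G) :
    HasGraphMinor G (completeGraph (Fin 5)) := by
  obtain ⟨f, hc, hd, ha⟩ := h
  have ha' : ∀ i j, i ≠ j → ∃ a ∈ f i, ∃ b ∈ f j, G.Adj a b := by
    intro i j hij
    rcases lt_or_gt_of_ne hij with h | h
    · exact ha i j h
    · obtain ⟨a, h1, b, h2, h3⟩ := ha j i h
      exact ⟨b, h2, a, h1, h3.symm⟩
  have hne : ∀ i, (f i).Nonempty := by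
    intro i
    obtain ⟨j, hj⟩ := exists_ne i
    obtain ⟨a, h1, -⟩ := ha' i j hj.symm
    exact ⟨a, h1⟩
  refine ⟨f, hne, ?_, fun i j hij => hd i j hij, fun i j hij => ha' i j (by simpa using hij)⟩
  intro i
  have : Nonempty (f i) := (hne i).to_subtype
  refine ⟨?_⟩
  rintro ⟨p, hp⟩ ⟨q, hq⟩
  have h := hc i p hp q hq
  clear ha ha' hd
  induction h with
  | refl => exact Reachable.refl _
  | tail _ h2 ih =>
    refine (ih h2.2.1).trans (Adj.reachable ?_)
    exact h2.1

theorem Conn.single {V : Type} (G : SimpleGraph V) (a : V) : Conn G {a} := by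
  rintro p rfl q rfl
  exact Relation.ReflTransGen.refl

theorem Conn.pair {V : Type} (G : SimpleGraph V) {a b : V} (h : G.Adj a b) : Conn G {a, b} := by
  rintro p (rfl | rfl) q (rfl | rfl)
  · exact Relation.ReflTransGen.refl
  · exact Relation.ReflTransGen.single ⟨h, by simp, by simp⟩
  · exact Relation.ReflTransGen.single ⟨h.symm, by simp, by simp⟩
  · exact Relation.ReflTransGen.refl

theorem Conn.triple {V : Type} (G : SimpleGraph V) {a b w : V} (h : G.Adj a w)
    (h' : G.Adj b w) : Conn G {a, b, w} := by
  have h1 : Relation.ReflTransGen (Step G {a, b, w}) a w :=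
    Relation.ReflTransGen.single ⟨h, by simp, by simp⟩
  have h2 : Relation.ReflTransGen (Step G {a, b, w}) b w :=
    Relation.ReflTransGen.single ⟨h', by simp, by simp⟩
  have h3 : Relation.ReflTransGen (Step G {a, b, w}) w a :=
    Relation.ReflTransGen.single ⟨h.symm, by simp, by simp⟩
  have h4 : Relation.ReflTransGen (Step G {a, b, w}) w b :=
    Relation.ReflTransGen.single ⟨h'.symm, by simp, by simp⟩
  rintro p (rfl | rfl | rfl) q (rfl | rfl | rfl)
  · exact Relation.ReflTransGen.refl
  · exact h1.trans h4
  · exact h1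
  · exact h2.trans h3
  · exact Relation.ReflTransGen.refl
  · exact h2
  · exact h3
  · exact h4
  · exact Relation.ReflTransGen.refl

/-- Pull a model back along a map with connected fibres. -/
theorem Model.pullback {V V' : Type} {G : SimpleGraph V} {G' : SimpleGraph V'} (φ : V → V')
    (hφ : ∀ z, Conn G (φ ⁻¹' {z}))
    (hG : ∀ a b, G'.Adj a b → ∃ p q, G.Adj p q ∧ φ p = a ∧ φ q = b)
    (h : Model G') : Model G := by
  obtain ⟨f, hc, hd, ha⟩ := h
  refine ⟨fun i => φ ⁻¹' (f i), ?_, fun i j hij => (hd i j hij).preimage φ, ?_⟩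
  · intro i p hp q hq
    have fib : ∀ r s, r ∈ φ ⁻¹' (f i) → φ r = φ s →
        Relation.ReflTransGen (Step G (φ ⁻¹' (f i))) r s := by
      intro r s hr hrs
      refine Relation.ReflTransGen.mono ?_ _ _ (hφ (φ s) r hrs s rfl)
      rintro t t' ⟨h1, h2, h3⟩
      have e2 : φ t = φ s := h2
      have e3 : φ t' = φ s := h3
      refine ⟨h1, ?_, ?_⟩
      · change φ t ∈ f i
        rw [e2, ← hrs]; exact hr
      · change φ t' ∈ f i
        rw [e3, ← hrs]; exact hr
    have key : ∀ z, Relation.ReflTransGen (Step G' (f i)) (φ p) z → ∀ s, φ s = z →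
        Relation.ReflTransGen (Step G (φ ⁻¹' (f i))) p s := by
      intro z hz
      induction hz with
      | refl => intro s hs; exact fib p s hp hs.symm
      | tail _ h2 ih =>
        intro s hs
        obtain ⟨p', q', h3, h4, h5⟩ := hG _ _ h2.1
        have hp' : p' ∈ φ ⁻¹' (f i) := by
          change φ p' ∈ f i
          rw [h4]; exact h2.2.1
        have hq' : q' ∈ φ ⁻¹' (f i) := by
          change φ q' ∈ f i
          rw [h5]; exact h2.2.2
        exact ((ih p' h4).tail ⟨h3, hp', hq'⟩).trans (fib q' s hq' (h5.trans hs.symm))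
    exact key _ (hc i (φ p) hp (φ q) hq) q rfl
  · intro i j hij
    obtain ⟨a, h1, b, h2, h3⟩ := ha i j hij
    obtain ⟨p, q, h4, h5, h6⟩ := hG a b h3
    exact ⟨p, by simpa [h5] using h1, q, by simpa [h6] using h2, h4⟩

theorem Model.mono {V : Type} {G G' : SimpleGraph V} (hle : G' ≤ G) (h : Model G') : Model G := by
  refine h.pullback id (fun z => ?_) (fun a b hab => ⟨a, b, hle hab, rfl, rfl⟩)
  simpa using Conn.single G z

theorem Model.of_comap {V V' : Type} {G : SimpleGraph V} (g : V' ↪ V)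
    (h : Model (G.comap g)) : Model G := by
  obtain ⟨f, hc, hd, ha⟩ := h
  refine ⟨fun i => g '' (f i), ?_, ?_, ?_⟩
  · rintro i _ ⟨p, hp, rfl⟩ _ ⟨q, hq, rfl⟩
    refine Relation.ReflTransGen.lift g ?_ _ _ (hc i p hp q hq)
    rintro a b ⟨h1, h2, h3⟩
    exact ⟨h1, ⟨a, h2, rfl⟩, ⟨b, h3, rfl⟩⟩
  · intro i j hij
    exact (Set.disjoint_image_iff g.injective).2 (hd i j hij)
  · intro i j hij
    obtain ⟨a, h1, b, h2, h3⟩ := ha i j hij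
    exact ⟨g a, ⟨a, h1, rfl⟩, g b, ⟨b, h2, rfl⟩, h3⟩

/-- Five sets, given one by one. -/
theorem Model.of_five {V : Type} {G : SimpleGraph V} {w a b d e : V} (s : Set V)
    (hs : Conn G s) (ha : a ∈ s)
    (hwn : w ∉ s) (hbn : b ∉ s) (hdn : d ∉ s) (hen : e ∉ s)
    (wa : G.Adj w a) (wb : G.Adj w b) (wd : G.Adj w d) (we : G.Adj w e)
    (ab : ∃ z ∈ s, G.Adj z b) (ad : ∃ z ∈ s, G.Adj z d) (ae : ∃ z ∈ s, G.Adj z e)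
    (bd : G.Adj b d) (be : G.Adj b e) (de : G.Adj d e) : Model G := by
  refine ⟨![{w}, s, {b}, {d}, {e}], ?_, ?_, ?_⟩
  · intro i
    fin_cases i
    · exact Conn.single G w
    · exact hs
    · exact Conn.single G b
    · exact Conn.single G d
    · exact Conn.single G e
  · have h1 := wb.ne
    have h2 := wd.ne
    have h3 := we.ne
    have h4 := bd.ne
    have h5 := be.ne
    have h6 := de.ne
    have h1' := wb.ne'
    have h2' := wd.ne'
    have h3' := we.ne'
    have h4' := bd.ne'
    have h5' := be.ne'
    have h6' := de.ne'
    intro i j hij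
    fin_cases i <;> fin_cases j <;> simp_all
  · intro i j hij
    fin_cases i <;> fin_cases j <;> simp_all
    exact ⟨a, ha, wa⟩

/-- A four-clique in a neighbourhood gives a `K₅` model. -/
theorem exists_nonadj {V : Type} [DecidableEq V] {G : SimpleGraph V} (hG : ¬ Model G) (w : V)
    (T : Finset V) (hT : 4 ≤ T.card) (hw : ∀ t ∈ T, G.Adj w t) :
    ∃ a ∈ T, ∃ b ∈ T, a ≠ b ∧ ¬ G.Adj a b := by
  by_contra! hcon
  obtain ⟨T', hT', hc⟩ := Finset.exists_subset_card_eq hT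
  obtain ⟨a, b, d, e, h1, h2, h3, h4, h5, h6, rfl⟩ := Finset.card_eq_four.1 hc
  have ha : a ∈ T := hT' (by simp)
  have hb : b ∈ T := hT' (by simp)
  have hd : d ∈ T := hT' (by simp)
  have he : e ∈ T := hT' (by simp)
  exact hG (Model.of_five (w := w) (a := a) (b := b) (d := d) (e := e) {a} (Conn.single G a)
    rfl (hw a ha).ne h1.symm h2.symm h3.symm
    (hw a ha) (hw b hb) (hw d hd) (hw e he) ⟨a, rfl, hcon a ha b hb h1⟩
    ⟨a, rfl, hcon a ha d hd h2⟩ ⟨a, rfl, hcon a ha e he h3⟩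
    (hcon b hb d hd h4) (hcon b hb e he h5) (hcon d hd e he h6))

/-! ### Edge bound for graphs without `K₅` minor -/

section Finite

variable {V : Type} [Fintype V] [DecidableEq V]

open Classical in
/-- Neighbours as a finset. -/
noncomputable def nb (G : SimpleGraph V) (p : V) : Finset V :=
  Finset.univ.filter fun q => G.Adj p q

theorem mem_nb {G : SimpleGraph V} {p q : V} : q ∈ nb G p ↔ G.Adj p q := by
  simp [nb]

open Classical in
/-- Ordered adjacent pairs. -/
noncomputable def pairs (G : SimpleGraph V) : Finset (V × V) :=
  Finset.univ.filter fun e => G.Adj e.1 e.2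

theorem mem_pairs {G : SimpleGraph V} {e : V × V} : e ∈ pairs G ↔ G.Adj e.1 e.2 := by
  simp [pairs]

theorem card_pairs (G : SimpleGraph V) (S : Finset V) (hS : ∀ p q, G.Adj p q → p ∈ S) :
    (pairs G).card = ∑ p ∈ S, (nb G p).card := by
  rw [Finset.card_eq_sum_card_fiberwise (f := Prod.fst) (t := S)]
  · refine Finset.sum_congr rfl fun p _ => ?_
    refine Finset.card_bij (fun e _ => e.2) ?_ ?_ ?_
    · rintro ⟨a, b⟩ h
      simp only [Finset.mem_filter, mem_pairs] at h
      obtain ⟨h1, rfl⟩ := h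
      exact mem_nb.2 h1
    · rintro ⟨a, b⟩ h ⟨a', b'⟩ h' hb
      simp only [Finset.mem_filter, mem_pairs] at h h'
      simp only at hb
      rw [Prod.mk.injEq]
      exact ⟨h.2.trans h'.2.symm, hb⟩
    · intro b hb
      exact ⟨(p, b), by simpa [mem_pairs] using mem_nb.1 hb, rfl⟩
  · rintro ⟨a, b⟩ h
    exact hS a b (mem_pairs.1 h)

/-- Contract `x` into `u`. -/
def contr (G : SimpleGraph V) (u x : V) : SimpleGraph V :=
  SimpleGraph.fromRel fun a b =>
    ∃ p q : V, G.Adj p q ∧ (if p = x then u else p) = a ∧ (if q = x then u else q) = b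

theorem contr_adj {G : SimpleGraph V} {u x a b : V} : (contr G u x).Adj a b ↔ a ≠ b ∧
    ∃ p q : V, G.Adj p q ∧ (if p = x then u else p) = a ∧ (if q = x then u else q) = b := by
  rw [contr, SimpleGraph.fromRel_adj]
  refine and_congr_right fun _ => ⟨?_, Or.inl⟩
  rintro (h | ⟨p, q, h1, h2, h3⟩)
  · exact h
  · exact ⟨q, p, h1.symm, h3, h2⟩

theorem contr_model {G : SimpleGraph V} {u x : V} (h : G.Adj u x) (hM : Model (contr G u x)) :
    Model G := by
  refine hM.pullback (fun p => if p = x then u else p) ?_ fun a b hab => (contr_adj.1 hab).2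
  intro z
  have hux := h.ne
  by_cases hzu : z = u
  · have : (fun p => if p = x then u else p) ⁻¹' {z} = {u, x} := by
      ext p
      by_cases hp : p = x <;> simp [hp, hzu]
    rw [this]
    exact Conn.pair G h
  · intro p hp q hq
    have h1 : p = z := by
      by_cases hpx : p = x <;> simp [hpx] at hp
      · exact absurd hp.symm hzu
      · exact hp
    have h2 : q = z := by
      by_cases hqx : q = x <;> simp [hqx] at hq
      · exact absurd hq.symm hzu
      · exact hq
    rw [h1, h2]

theorem card_contr (G : SimpleGraph V) {u x : V} (h : G.Adj u x) :
    (pairs G).card ≤ (pairs (contr G u x)).card + 2 + 2 * (nb G u ∩ nb G x).card := by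
  set C := nb G u ∩ nb G x with hC
  set R : Finset (V × V) := {(u, x), (x, u)} ∪
    (C.image (fun p => (x, p)) ∪ C.image (fun p => (p, x))) with hR
  have hRc : R.card ≤ 2 + 2 * C.card := by
    have h1 := Finset.card_union_le ({(u, x), (x, u)} : Finset (V × V))
      (C.image (fun p => (x, p)) ∪ C.image (fun p => (p, x)))
    have h2 := Finset.card_union_le (C.image (fun p => (x, p))) (C.image (fun p => (p, x)))
    have h3 : (C.image (fun p => (x, p))).card ≤ C.card := Finset.card_image_le
    have h4 : (C.image (fun p => (p, x))).card ≤ C.card := Finset.card_image_le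
    have h5 : ({(u, x), (x, u)} : Finset (V × V)).card ≤ 2 := Finset.card_le_two
    rw [← hR] at h1
    omega
  have hux := h.ne
  have memR : ∀ a b : V, G.Adj a b → (a, b) ∉ R → (a = x → b ≠ u ∧ ¬ G.Adj u b) ∧
      (b = x → a ≠ u ∧ ¬ G.Adj u a) := by
    intro a b hab hn
    simp only [hR, hC, Finset.mem_union, Finset.mem_insert, Finset.mem_singleton,
      Finset.mem_image, Finset.mem_inter, mem_nb, Prod.mk.injEq, not_or, not_exists, not_and] at hn
    obtain ⟨⟨n1, n2⟩, n3, n4⟩ := hn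
    refine ⟨?_, ?_⟩
    · rintro rfl
      exact ⟨fun hb => n2 rfl hb, fun hb => n3 b ⟨hb, hab⟩ rfl rfl⟩
    · rintro rfl
      exact ⟨fun hb => n1 hb rfl, fun hb => n4 a ⟨hb, hab.symm⟩ rfl rfl⟩
  have hinj : (pairs G \ R).card ≤ (pairs (contr G u x)).card := by
    refine Finset.card_le_card_of_injOn
      (fun e => (if e.1 = x then u else e.1, if e.2 = x then u else e.2)) ?_ ?_
    · rintro ⟨a, b⟩ hab
      simp only [Finset.coe_sdiff, Set.mem_sdiff, Finset.mem_coe, mem_pairs] at hab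
      obtain ⟨hab, hn⟩ := hab
      have := memR a b hab hn
      have hne := hab.ne
      refine mem_pairs.2 (contr_adj.2 ⟨?_, a, b, hab, rfl, rfl⟩)
      simp only
      split_ifs <;> grind
    · rintro ⟨a, b⟩ hab ⟨a', b'⟩ hab' heq
      simp only [Finset.coe_sdiff, Set.mem_sdiff, Finset.mem_coe, mem_pairs] at hab hab'
      obtain ⟨hab, hn⟩ := hab
      obtain ⟨hab', hn'⟩ := hab'
      have h1 := memR a b hab hn
      have h2 := memR a' b' hab' hn'
      have hne := hab.ne
      have hne' := hab'.ne
      have hs := hab.symm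
      have hs' := hab'.symm
      simp only [Prod.mk.injEq] at heq ⊢
      obtain ⟨e1, e2⟩ := heq
      split_ifs at e1 e2 <;> grind
  have := Finset.card_le_card_sdiff_add_card (s := pairs G) (t := R)
  omega

theorem local_model {G : SimpleGraph V} (w : V) (N : Finset V) (hN : ∀ z ∈ N, G.Adj w z)
    (hne : N.Nonempty) (h5 : N.card ≤ 5) (h3 : ∀ z ∈ N, 3 ≤ (N ∩ nb G z).card) : Model G := by
  by_contra hM
  have miss : ∀ z ∈ N, ∀ s ∈ N, ∀ t ∈ N, s ≠ z → t ≠ z → s ≠ t → G.Adj z s ∨ G.Adj z t := by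
    intro z hz s hs t ht hsz htz hst
    by_contra! hcon
    have hsub : N ∩ nb G z ⊆ N \ {z, s, t} := by
      intro q hq
      simp only [Finset.mem_inter, mem_nb] at hq
      simp only [Finset.mem_sdiff, Finset.mem_insert, Finset.mem_singleton, not_or]
      exact ⟨hq.1, hq.2.ne', fun h => hcon.1 (h ▸ hq.2), fun h => hcon.2 (h ▸ hq.2)⟩
    have h1 := Finset.card_le_card hsub
    have hs3 : ({z, s, t} : Finset V) ⊆ N := by
      intro q; simp only [Finset.mem_insert, Finset.mem_singleton]; rintro (rfl | rfl | rfl) <;> assumption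
    rw [Finset.card_sdiff_of_subset hs3, Finset.card_eq_three.2 ⟨z, s, t, hsz.symm, htz.symm, hst, rfl⟩] at h1
    have := h3 z hz
    omega
  have h4 : 4 ≤ N.card := by
    obtain ⟨z, hz⟩ := hne
    have hsub : N ∩ nb G z ⊆ N.erase z := by
      intro q hq
      simp only [Finset.mem_inter, mem_nb] at hq
      exact Finset.mem_erase.2 ⟨hq.2.ne', hq.1⟩
    have h1 := Finset.card_le_card hsub
    rw [Finset.card_erase_of_mem hz] at h1
    have := h3 z hz
    omega
  obtain ⟨a, ha, b, hb, hab, hnab⟩ := exists_nonadj hM w N h4 hN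
  -- three further vertices
  have h5' : N.card = 5 := by
    have hsub : N ∩ nb G a ⊆ (N.erase a).erase b := by
      intro q hq
      simp only [Finset.mem_inter, mem_nb] at hq
      exact Finset.mem_erase.2 ⟨fun h => hnab (h ▸ hq.2), Finset.mem_erase.2 ⟨hq.2.ne', hq.1⟩⟩
    have h1 := Finset.card_le_card hsub
    rw [Finset.card_erase_of_mem (Finset.mem_erase.2 ⟨hab.symm, hb⟩),
      Finset.card_erase_of_mem ha] at h1
    have := h3 a ha
    omega
  -- everything else is adjacent to a and b
  have adja : ∀ t ∈ N, t ≠ a → t ≠ b → G.Adj a t := fun t ht h1 h2 =>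
    (miss a ha b hb t ht hab.symm h1 h2.symm).resolve_left hnab
  have adjb : ∀ t ∈ N, t ≠ a → t ≠ b → G.Adj b t := fun t ht h1 h2 =>
    (miss b hb a ha t ht hab h2 h1.symm).resolve_left (fun h => hnab h.symm)
  have hbm : 4 ≤ (N.erase b).card := by
    rw [Finset.card_erase_of_mem hb]; omega
  obtain ⟨c, hc, d, hd, hcd, hncd⟩ := exists_nonadj hM w (N.erase b) hbm
    (fun t ht => hN t (Finset.mem_of_mem_erase ht))
  obtain ⟨hcb, hcN⟩ := Finset.mem_erase.1 hc
  obtain ⟨hdb, hdN⟩ := Finset.mem_erase.1 hd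
  have hca : c ≠ a := by
    rintro rfl
    exact hncd (adja d hdN hcd.symm hdb)
  have hda : d ≠ a := by
    rintro rfl
    exact hncd (adja c hcN hcd hcb).symm
  obtain ⟨e, he⟩ : (N \ {a, b, c, d}).Nonempty := by
    rw [← Finset.card_pos]
    have := Finset.le_card_sdiff ({a, b, c, d} : Finset V) N
    have h4 : ({a, b, c, d} : Finset V).card ≤ 4 := Finset.card_le_four
    omega
  simp only [Finset.mem_sdiff, Finset.mem_insert, Finset.mem_singleton, not_or] at he
  obtain ⟨heN, hea, heb, hec, hed⟩ := he
  have hde : G.Adj d e :=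
    (miss d hdN c hcN e heN hcd hed (Ne.symm hec)).resolve_left (fun h => hncd h.symm)
  refine hM (Model.of_five (w := w) (a := a) (b := b) (d := d) (e := e) {a, c}
    (Conn.pair G (adja c hcN hca hcb)) (by simp) ?_ ?_ ?_ ?_ (hN a ha) (hN b hb) (hN d hdN)
    (hN e heN) ⟨c, by simp, (adjb c hcN hca hcb).symm⟩ ⟨a, by simp, adja d hdN hda hdb⟩
    ⟨a, by simp, adja e heN hea heb⟩ (adjb d hdN hda hdb) (adjb e heN hea heb) hde)
  · have := (hN a ha).ne
    have := (hN c hcN).ne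
    simp_all
  · simp [hab.symm, hcb.symm]
  · simp [hda, hcd.symm]
  · simp [hea, hec]

theorem edge_bound : ∀ (n : ℕ) (G : SimpleGraph V) (S : Finset V),
    S.card + (pairs G).card = n → (∀ p q, G.Adj p q → p ∈ S) → 3 ≤ S.card → ¬ Model G →
    (pairs G).card + 12 ≤ 6 * S.card := by
  intro n
  induction n using Nat.strong_induction_on with
  | _ n ih =>
  intro G S hn hS h3 hM
  by_contra! hlt
  have hsum := card_pairs G S hS
  -- size three
  have h4 : 4 ≤ S.card := by
    by_contra! h4
    have : ∑ p ∈ S, (nb G p).card ≤ ∑ p ∈ S, 2 := by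
      refine Finset.sum_le_sum fun p hp => ?_
      have hsub : nb G p ⊆ S.erase p := by
        intro q hq
        have hq := mem_nb.1 hq
        exact Finset.mem_erase.2 ⟨hq.ne', hS q p hq.symm⟩
      have := Finset.card_le_card hsub
      rw [Finset.card_erase_of_mem hp] at this
      omega
    simp only [Finset.sum_const, smul_eq_mul] at this
    omega
  -- not too many edges
  have hup : (pairs G).card + 10 ≤ 6 * S.card := by
    by_contra! hup
    have hpos : (pairs G).Nonempty := by
      rw [← Finset.card_pos]; omega
    obtain ⟨⟨a, b⟩, hab⟩ := hpos
    have hab := mem_pairs.1 hab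
    simp only at hab
    set G' := G.deleteEdges {s(a, b)} with hG'
    have hle : G' ≤ G := G.deleteEdges_le _
    have hp : pairs G' = ((pairs G).erase (a, b)).erase (b, a) := by
      ext ⟨p, q⟩
      simp only [mem_pairs, hG', SimpleGraph.deleteEdges_adj, Finset.mem_erase, ne_eq,
        Prod.mk.injEq, Set.mem_singleton_iff, Sym2.eq_iff]
      tauto
    have hc : (pairs G').card + 2 = (pairs G).card := by
      have m1 : (a, b) ∈ pairs G := mem_pairs.2 hab
      have m2 : (b, a) ∈ (pairs G).erase (a, b) :=
        Finset.mem_erase.2 ⟨by simp [hab.ne'], mem_pairs.2 hab.symm⟩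
      rw [hp]
      have := Finset.card_erase_add_one m1
      have := Finset.card_erase_add_one m2
      omega
    have := ih (S.card + (pairs G').card) (by omega) G' S rfl (fun p q h => hS p q (hle h)) h3
      (fun h => hM (h.mono hle))
    omega
  obtain ⟨w, hwS, hw⟩ : ∃ w ∈ S, (nb G w).card ≤ 5 := by
    by_contra! hcon
    have : ∑ p ∈ S, 6 ≤ ∑ p ∈ S, (nb G p).card := Finset.sum_le_sum fun p hp => hcon p hp
    simp only [Finset.sum_const, smul_eq_mul] at this
    omega
  have hcS : (S.erase w).card + 1 = S.card := Finset.card_erase_add_one hwS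
  rcases (nb G w).eq_empty_or_nonempty with h0 | hne
  · have := ih ((S.erase w).card + (pairs G).card) (by omega) G (S.erase w) rfl (by
      intro p q h
      refine Finset.mem_erase.2 ⟨?_, hS p q h⟩
      rintro rfl
      have := mem_nb.2 h
      simp [h0] at this) (by omega) hM
    omega
  · refine hM (local_model w (nb G w) (fun z hz => mem_nb.1 hz) hne hw ?_)
    intro z hz
    by_contra! hlt3
    have hz := mem_nb.1 hz
    have hcc := card_contr G hz.symm
    rw [Finset.inter_comm] at hcc
    -- contract `w` into `z`
    have hcard : (pairs (contr G z w)).card ≤ (pairs G).card := by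
      have hsub : pairs (contr G z w) ⊆
          (pairs G).image (fun e => (if e.1 = w then z else e.1, if e.2 = w then z else e.2)) := by
        rintro ⟨a, b⟩ h
        obtain ⟨-, p, q, h1, h2, h3⟩ := contr_adj.1 (mem_pairs.1 h)
        exact Finset.mem_image.2 ⟨(p, q), mem_pairs.2 h1, by simp only at h2 h3; simp [h2, h3]⟩
      exact (Finset.card_le_card hsub).trans Finset.card_image_le
    have := ih ((S.erase w).card + (pairs (contr G z w)).card) (by omega) (contr G z w)
      (S.erase w) rfl (by
        intro a b h
        obtain ⟨-, p, q, h1, h2, h3⟩ := contr_adj.1 h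
        rw [Finset.mem_erase]
        split_ifs at h2 with hpw
        · subst h2
          exact ⟨hz.ne', hS z w hz.symm⟩
        · subst h2
          exact ⟨hpw, hS p q h1⟩) (by omega) (fun h => hM (contr_model hz.symm h))
    omega

/-! ### Colouring -/

/-- Proper colouring with five colours. -/
def Proper {V : Type} (G : SimpleGraph V) (c : V → Fin 5) : Prop :=
  ∀ p q, G.Adj p q → c p ≠ c q

/-- Extend a colouring to one more vertex. -/
theorem extend_one {G : SimpleGraph V} (w : V) (c : V → Fin 5)
    (hc : ∀ p q, p ≠ w → q ≠ w → G.Adj p q → c p ≠ c q)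
    (h4 : ((nb G w).image c).card ≤ 4) :
    ∃ c' : V → Fin 5, Proper G c' ∧ ∀ p, p ≠ w → c' p = c p := by
  obtain ⟨k, hk⟩ : ∃ k, k ∉ (nb G w).image c := by
    by_contra! hcon
    have : (nb G w).image c = Finset.univ := Finset.eq_univ_iff_forall.2 hcon
    rw [this] at h4
    simp at h4
  have hk' : ∀ q, G.Adj w q → c q ≠ k := fun q hq h =>
    hk (Finset.mem_image.2 ⟨q, mem_nb.2 hq, h⟩)
  refine ⟨fun p => if p = w then k else c p, ?_, fun p hp => by simp [hp]⟩
  intro p q hpq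
  by_cases hp : p = w
  · subst hp
    simpa [hpq.ne'] using (hk' q hpq).symm
  · by_cases hq : q = w
    · subst hq
      simpa [hp] using hk' p hpq.symm
    · simpa [hp, hq] using hc p q hp hq hpq

open Classical in
/-- Non-isolated vertices. -/
noncomputable def supp (G : SimpleGraph V) : Finset V :=
  Finset.univ.filter fun p => ∃ q, G.Adj p q

theorem mem_supp {G : SimpleGraph V} {p : V} : p ∈ supp G ↔ ∃ q, G.Adj p q := by
  simp [supp]

/-- Delete `w` and identify `b` with `a`. -/
def ident (G : SimpleGraph V) (w a b : V) : SimpleGraph V := contr (G.deleteIncidenceSet w) a b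

theorem del_adj {G : SimpleGraph V} {w p q : V} :
    (G.deleteIncidenceSet w).Adj p q ↔ G.Adj p q ∧ p ≠ w ∧ q ≠ w :=
  SimpleGraph.deleteIncidenceSet_adj

theorem ident_model {G : SimpleGraph V} {w a b : V} (ha : G.Adj a w) (hb : G.Adj b w)
    (hM : Model (ident G w a b)) : Model G := by
  have haw := ha.ne
  have hbw := hb.ne
  refine hM.pullback (fun p => if p = b ∨ p = w then a else p) ?_ ?_
  · intro z
    by_cases hz : z = a
    · have : (fun p => if p = b ∨ p = w then a else p) ⁻¹' {z} = {a, b, w} := by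
        ext p
        simp only [Set.mem_preimage, Set.mem_singleton_iff, Set.mem_insert_iff, hz]
        split_ifs with h <;> tauto
      rw [this]
      exact Conn.triple G ha hb
    · have key : ∀ p, p ∈ (fun p => if p = b ∨ p = w then a else p) ⁻¹' {z} → p = z := by
        intro p hp
        simp only [Set.mem_preimage, Set.mem_singleton_iff] at hp
        split_ifs at hp with h
        · exact absurd hp.symm hz
        · exact hp
      intro p hp q hq
      rw [key p hp, key q hq]
  · intro s t hst
    obtain ⟨-, p, q, h1, h2, h3⟩ := contr_adj.1 hst
    obtain ⟨h1, hp, hq⟩ := del_adj.1 h1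
    refine ⟨p, q, h1, ?_, ?_⟩
    · simpa [hp] using h2
    · simpa [hq] using h3

theorem ident_supp {G : SimpleGraph V} {w a b : V} (ha : G.Adj a w) :
    (supp (ident G w a b)).card < (supp G).card := by
  refine Finset.card_lt_card ⟨?_, ?_⟩
  · intro p hp
    obtain ⟨q, hq⟩ := mem_supp.1 hp
    obtain ⟨-, p', q', h1, h2, h3⟩ := contr_adj.1 hq
    have h1 := del_adj.1 h1
    split_ifs at h2
    · subst h2
      exact mem_supp.2 ⟨w, ha⟩
    · subst h2
      exact mem_supp.2 ⟨q', h1.1⟩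
  · intro hsub
    obtain ⟨q, hq⟩ := mem_supp.1 (hsub (mem_supp.2 ⟨a, ha.symm⟩))
    obtain ⟨-, p', q', h1, h2, h3⟩ := contr_adj.1 hq
    have h1 := del_adj.1 h1
    split_ifs at h2
    · exact ha.ne h2
    · exact h1.2.1 h2

theorem del_supp {G : SimpleGraph V} {w a : V} (ha : G.Adj a w) :
    (supp (G.deleteIncidenceSet w)).card < (supp G).card := by
  refine Finset.card_lt_card ⟨?_, ?_⟩
  · intro p hp
    obtain ⟨q, hq⟩ := mem_supp.1 hp
    exact mem_supp.2 ⟨q, (del_adj.1 hq).1⟩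
  · intro hsub
    obtain ⟨q, hq⟩ := mem_supp.1 (hsub (mem_supp.2 ⟨a, ha.symm⟩))
    exact (del_adj.1 hq).2.1 rfl

/-- Lift a colouring of `ident`. -/
theorem ident_color {G : SimpleGraph V} {w a b : V} (ha : G.Adj a w) (hb : G.Adj b w)
    (hab : a ≠ b) (hnab : ¬ G.Adj a b) (h5 : (nb G w).card ≤ 5) {c : V → Fin 5}
    (hc : Proper (ident G w a b) c) :
    ∃ c', Proper G c' ∧ ∀ p, p ≠ w → p ≠ b → c' p = c p := by
  have hwit := extend_one (G := G) w (fun p => if p = b then c a else c p) ?_ ?_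
  · obtain ⟨c', h1, h2⟩ := hwit
    exact ⟨c', h1, fun p hp hpb => by rw [h2 p hp, if_neg hpb]⟩
  · intro p q hp hq hpq
    have hne := hpq.ne
    have h := hc (if p = b then a else p) (if q = b then a else q) (contr_adj.2 ⟨?_, p, q,
      del_adj.2 ⟨hpq, hp, hq⟩, rfl, rfl⟩)
    · split_ifs at h ⊢ <;> exact h
    · have := hpq.symm
      split_ifs <;> grind
  · have hsub : (nb G w).image (fun p => if p = b then c a else c p) ⊆
        ((nb G w).erase b).image c := by
      intro k hk
      obtain ⟨p, hp, rfl⟩ := Finset.mem_image.1 hk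
      by_cases hpb : p = b
      · simp only [hpb, if_true]
        exact Finset.mem_image_of_mem c (Finset.mem_erase.2 ⟨hab, mem_nb.2 ha.symm⟩)
      · simp only [hpb, if_false]
        exact Finset.mem_image_of_mem c (Finset.mem_erase.2 ⟨hpb, hp⟩)
    have h1 := Finset.card_le_card hsub
    have h2 : (((nb G w).erase b).image c).card ≤ ((nb G w).erase b).card := Finset.card_image_le
    rw [Finset.card_erase_of_mem (mem_nb.2 hb.symm)] at h2
    omega

/-- A vertex of small degree outside `{v, y}`. -/
theorem exists_small {G : SimpleGraph V} (hM : ¬ Model G) (v y : V) (hvy : v ≠ y)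
    (hex : ∃ w ∈ supp G, w ≠ v ∧ w ≠ y) :
    ∃ w ∈ supp G, w ≠ v ∧ w ≠ y ∧ (nb G w).card ≤ 5 := by
  by_contra! hcon
  set T := ((supp G).erase v).erase y with hT
  have hTm : ∀ p, p ∈ T ↔ p ≠ y ∧ p ≠ v ∧ p ∈ supp G := fun p => by simp [hT]
  have hyT : y ∉ T := by simp [hT]
  have hvT : v ∉ insert y T := by simp [hT, hvy]
  have hT6 : 6 * T.card ≤ ∑ p ∈ T, (nb G p).card := by
    have : ∑ p ∈ T, 6 ≤ ∑ p ∈ T, (nb G p).card := Finset.sum_le_sum fun p hp => by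
      have hp := (hTm p).1 hp
      exact hcon p hp.2.2 hp.2.1 hp.1
    simp only [Finset.sum_const, smul_eq_mul] at this
    omega
  have hT3 : 3 ≤ T.card := by
    obtain ⟨w, hw, hwv, hwy⟩ := hex
    have h6 := hcon w hw hwv hwy
    have hsub : (nb G w) ⊆ insert v (insert y T) := by
      intro q hq
      have hq := mem_nb.1 hq
      simp only [Finset.mem_insert, hTm]
      have : q ∈ supp G := mem_supp.2 ⟨w, hq.symm⟩
      tauto
    have h1 := Finset.card_le_card hsub
    rw [Finset.card_insert_of_notMem hvT, Finset.card_insert_of_notMem hyT] at h1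
    omega
  have hS : ∀ p q, G.Adj p q → p ∈ insert v (insert y T) := by
    intro p q h
    simp only [Finset.mem_insert, hTm]
    have : p ∈ supp G := mem_supp.2 ⟨q, h⟩
    tauto
  have hsum := card_pairs G _ hS
  rw [Finset.sum_insert hvT, Finset.sum_insert hyT] at hsum
  have hcard : (insert v (insert y T)).card = T.card + 2 := by
    rw [Finset.card_insert_of_notMem hvT, Finset.card_insert_of_notMem hyT]
  have hb := edge_bound _ G _ rfl hS (by omega) hM
  rw [hcard] at hb
  have hv0 : (nb G v) = ∅ := by rw [← Finset.card_eq_zero]; omega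
  have hy0 : (nb G y) = ∅ := by rw [← Finset.card_eq_zero]; omega
  have hb2 := edge_bound _ G T rfl (by
    intro p q h
    rcases Finset.mem_insert.1 (hS p q h) with rfl | h'
    · have := mem_nb.2 h
      simp [hv0] at this
    · rcases Finset.mem_insert.1 h' with rfl | h'
      · have := mem_nb.2 h
        simp [hy0] at this
      · exact h') hT3 hM
  omega

theorem color_same (v y : V) (hvy : v ≠ y) : ∀ (n : ℕ) (G : SimpleGraph V),
    (supp G).card = n → ¬ Model G → ¬ G.Adj v y → ∃ c, Proper G c ∧ c v = c y := by
  intro n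
  induction n using Nat.strong_induction_on with
  | _ n ih =>
  intro G hn hM hnvy
  by_cases hex : ∃ w ∈ supp G, w ≠ v ∧ w ≠ y
  · obtain ⟨w, hw, hwv, hwy, h5⟩ := exists_small hM v y hvy hex
    obtain ⟨z, hz⟩ := mem_supp.1 hw
    by_cases hdel : (nb G w).card ≤ 4 ∨ (v ∈ nb G w ∧ y ∈ nb G w)
    · obtain ⟨c, hc, hcvy⟩ := ih _ (hn ▸ del_supp hz.symm) (G.deleteIncidenceSet w) rfl
        (fun h => hM (h.mono (G.deleteIncidenceSet_le w))) (fun h => hnvy (del_adj.1 h).1)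
      obtain ⟨c', h1, h2⟩ := extend_one (G := G) w c
        (fun p q hp hq hpq => hc p q (del_adj.2 ⟨hpq, hp, hq⟩)) (by
          rcases hdel with h | ⟨hv, hy⟩
          · exact Finset.card_image_le.trans h
          · have hsub : (nb G w).image c ⊆ ((nb G w).erase y).image c := by
              intro k hk
              obtain ⟨p, hp, rfl⟩ := Finset.mem_image.1 hk
              by_cases hpy : p = y
              · rw [hpy, ← hcvy]
                exact Finset.mem_image_of_mem c (Finset.mem_erase.2 ⟨hvy, hv⟩)
              · exact Finset.mem_image_of_mem c (Finset.mem_erase.2 ⟨hpy, hp⟩)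
            have h1 := Finset.card_le_card hsub
            have h2 : (((nb G w).erase y).image c).card ≤ ((nb G w).erase y).card :=
              Finset.card_image_le
            rw [Finset.card_erase_of_mem hy] at h2
            omega)
      exact ⟨c', h1, by rw [h2 v hwv.symm, h2 y hwy.symm, hcvy]⟩
    · push Not at hdel
      obtain ⟨h4, hnot⟩ := hdel
      have hcard : 4 ≤ (((nb G w).erase v).erase y).card := by
        by_cases hv : v ∈ nb G w
        · have hy := hnot hv
          rw [Finset.erase_eq_of_notMem (a := y) (fun h => hy (Finset.mem_of_mem_erase h)),
            Finset.card_erase_of_mem hv]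
          omega
        · rw [Finset.erase_eq_of_notMem hv]
          have := Finset.pred_card_le_card_erase (s := nb G w) (a := y)
          omega
      obtain ⟨a, ha, b, hb, hab, hnab⟩ := exists_nonadj hM w _ hcard (fun t ht =>
        mem_nb.1 (Finset.mem_of_mem_erase (Finset.mem_of_mem_erase ht)))
      simp only [Finset.mem_erase, mem_nb] at ha hb
      obtain ⟨hay, hav, ha⟩ := ha
      obtain ⟨hby, hbv, hb⟩ := hb
      obtain ⟨c, hc, hcvy⟩ := ih _ (hn ▸ ident_supp (b := b) ha.symm) (ident G w a b) rfl
        (fun h => hM (ident_model ha.symm hb.symm h)) (by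
          intro h
          obtain ⟨-, p, q, h1, h2, h3⟩ := contr_adj.1 h
          split_ifs at h2 h3
          · exact hav h2
          · exact hav h2
          · exact hay h3
          · subst h2 h3
            exact hnvy (del_adj.1 h1).1)
      obtain ⟨c', h1, h2⟩ := ident_color ha.symm hb.symm hab hnab h5 hc
      exact ⟨c', h1, by rw [h2 v hwv.symm hbv.symm, h2 y hwy.symm hby.symm, hcvy]⟩
  · push Not at hex
    refine ⟨fun _ => 0, ?_, rfl⟩
    intro p q hpq
    exfalso
    have hp := hex p (mem_supp.2 ⟨q, hpq⟩)
    have hq := hex q (mem_supp.2 ⟨p, hpq.symm⟩)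
    have hne := hpq.ne
    by_cases h1 : p = v
    · have h2 : q = y := hq fun h => hne (h1.trans h.symm)
      exact hnvy (h1 ▸ h2 ▸ hpq)
    · have h2 : p = y := hp h1
      have h3 : q = v := by
        by_contra h3
        exact hne (h2.trans (hq h3).symm)
      exact hnvy (h2 ▸ h3 ▸ hpq.symm)

theorem color_diff (v y : V) (hvy : v ≠ y) : ∀ (n : ℕ) (G : SimpleGraph V),
    (supp G).card = n → ¬ Model G → ∃ c, Proper G c ∧ c v ≠ c y := by
  intro n
  induction n using Nat.strong_induction_on with
  | _ n ih =>
  intro G hn hM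
  by_cases hex : ∃ w ∈ supp G, w ≠ v ∧ w ≠ y
  · obtain ⟨w, hw, hwv, hwy, h5⟩ := exists_small hM v y hvy hex
    obtain ⟨z, hz⟩ := mem_supp.1 hw
    by_cases hdel : (nb G w).card ≤ 4
    · obtain ⟨c, hc, hcvy⟩ := ih _ (hn ▸ del_supp hz.symm) (G.deleteIncidenceSet w) rfl
        (fun h => hM (h.mono (G.deleteIncidenceSet_le w)))
      obtain ⟨c', h1, h2⟩ := extend_one (G := G) w c
        (fun p q hp hq hpq => hc p q (del_adj.2 ⟨hpq, hp, hq⟩)) (Finset.card_image_le.trans hdel)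
      exact ⟨c', h1, by rwa [h2 v hwv.symm, h2 y hwy.symm]⟩
    · have hcard : 4 ≤ ((nb G w).erase v).card := by
        have := Finset.pred_card_le_card_erase (s := nb G w) (a := v)
        omega
      obtain ⟨a, ha, b, hb, hab, hnab⟩ := exists_nonadj hM w _ hcard (fun t ht =>
        mem_nb.1 (Finset.mem_of_mem_erase ht))
      -- arrange that `b ≠ y`
      obtain ⟨a, b, hbv, hby, ha, hb, hab, hnab⟩ : ∃ a b, b ≠ v ∧ b ≠ y ∧ G.Adj w a ∧ G.Adj w b ∧
          a ≠ b ∧ ¬ G.Adj a b := by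
        simp only [Finset.mem_erase, mem_nb] at ha hb
        by_cases hby : b = y
        · exact ⟨b, a, ha.1, fun h => hab (h.trans hby.symm), hb.2, ha.2, hab.symm,
            fun h => hnab h.symm⟩
        · exact ⟨a, b, hb.1, hby, ha.2, hb.2, hab, hnab⟩
      obtain ⟨c, hc, hcvy⟩ := ih _ (hn ▸ ident_supp (b := b) ha.symm) (ident G w a b) rfl
        (fun h => hM (ident_model ha.symm hb.symm h))
      obtain ⟨c', h1, h2⟩ := ident_color ha.symm hb.symm hab hnab h5 hc
      exact ⟨c', h1, by rwa [h2 v hwv.symm hbv.symm, h2 y hwy.symm hby.symm]⟩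
  · push Not at hex
    refine ⟨fun p => if p = v then 0 else 1, ?_, by simp [hvy.symm]⟩
    intro p q hpq
    have hp := hex p (mem_supp.2 ⟨q, hpq⟩)
    have hq := hex q (mem_supp.2 ⟨p, hpq.symm⟩)
    have hne := hpq.ne
    by_cases h1 : p = v
    · have : q ≠ v := fun h => hne (h1.trans h.symm)
      simp [h1, this]
    · have : q = v := by
        by_contra h2
        exact hne ((hp h1).trans (hq h2).symm)
      simp [h1, this]

end Finite

/-- Possibly infinite graphs, by compactness. -/
theorem color_all {W : Type} (G : SimpleGraph W) (hM : ¬ Model G) (v y : W) (hvy : v ≠ y)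
    (hnvy : ¬ G.Adj v y) (P : Prop) : ∃ c, Proper G c ∧ (c v = c y ↔ P) := by
  classical
  have hloc : ∀ s : Finset W, ∃ c : W → Fin 5, (∀ p ∈ s, ∀ q ∈ s, G.Adj p q → c p ≠ c q) ∧
      (c v = c y ↔ P) := by
    intro s
    set t := insert v (insert y s) with ht
    have hv : v ∈ t := by simp [ht]
    have hy : y ∈ t := by simp [ht]
    have hst : ∀ p ∈ s, p ∈ t := fun p hp => by simp [ht, hp]
    have hM' : ¬ Model (G.comap (Function.Embedding.subtype (· ∈ t))) :=
      fun h => hM h.of_comap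
    have hne : (⟨v, hv⟩ : {p // p ∈ t}) ≠ ⟨y, hy⟩ := fun h => hvy (congrArg Subtype.val h)
    have : ∃ c : {p // p ∈ t} → Fin 5, Proper (G.comap (Function.Embedding.subtype (· ∈ t))) c ∧
        (c ⟨v, hv⟩ = c ⟨y, hy⟩ ↔ P) := by
      by_cases hP : P
      · obtain ⟨c, h1, h2⟩ := color_same _ _ hne _ _ rfl hM' hnvy
        exact ⟨c, h1, by simp [h2, hP]⟩
      · obtain ⟨c, h1, h2⟩ := color_diff _ _ hne _ _ rfl hM'
        exact ⟨c, h1, by simp [h2, hP]⟩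
    obtain ⟨c, h1, h2⟩ := this
    refine ⟨fun p => if hp : p ∈ t then c ⟨p, hp⟩ else 0, ?_, ?_⟩
    · intro p hp q hq hpq
      simp only [hst p hp, hst q hq, dif_pos]
      exact h1 ⟨p, hst p hp⟩ ⟨q, hst q hq⟩ hpq
    · simpa only [hv, hy, dif_pos] using h2
  choose g hg1 hg2 using hloc
  obtain ⟨χ, hχ⟩ := Finset.rado_selection (β := fun _ : W => Fin 5) g
  refine ⟨χ, ?_, ?_⟩
  · intro p q hpq
    obtain ⟨t, hst, ht⟩ := hχ {p, q}
    rw [ht p (by simp), ht q (by simp)]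
    exact hg1 t p (hst (by simp)) q (hst (by simp)) hpq
  · obtain ⟨t, -, ht⟩ := hχ {v, y}
    rw [ht v (by simp), ht y (by simp)]
    exact hg2 t

/-- Match three colours by a permutation. -/
theorem exists_perm {a b d a' b' d' : Fin 5} (h1 : a ≠ b) (h2 : a ≠ d) (h1' : a' ≠ b')
    (h2' : a' ≠ d') (h : b = d ↔ b' = d') :
    ∃ σ : Equiv.Perm (Fin 5), σ a = a' ∧ σ b = b' ∧ σ d = d' := by
  obtain ⟨σ, hσa, hσb⟩ : ∃ σ : Equiv.Perm (Fin 5), σ a = a' ∧ σ b = b' := by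
    refine ⟨(Equiv.swap a a').trans (Equiv.swap (Equiv.swap a a' b) b'), ?_, by simp⟩
    have : Equiv.swap a a' b ≠ a' := by
      intro h
      have h3 : Equiv.swap a a' b = Equiv.swap a a' a := by simpa using h
      exact h1 ((Equiv.swap a a').injective h3).symm
    simp only [Equiv.trans_apply, Equiv.swap_apply_left]
    exact Equiv.swap_apply_of_ne_of_ne this.symm h1'
  by_cases hbd : b = d
  · exact ⟨σ, hσa, hσb, by rw [← hbd, hσb, h.1 hbd]⟩
  · have hbd' : b' ≠ d' := fun e => hbd (h.2 e)
    refine ⟨σ.trans (Equiv.swap (σ d) d'), ?_, ?_, by simp⟩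
    · simp only [Equiv.trans_apply]
      rw [hσa]
      refine Equiv.swap_apply_of_ne_of_ne ?_ h2'
      rw [← hσa]
      exact fun e => h2 (σ.injective e)
    · simp only [Equiv.trans_apply]
      rw [hσb]
      refine Equiv.swap_apply_of_ne_of_ne ?_ hbd'
      rw [← hσb]
      exact fun e => hbd (σ.injective e)

end K5Aux

/-- in a plane (near-)triangulation `H` with outer 4-cycle `u,v,x,y`
(so `u,x` and `v,y` are nonadjacent, and `H` as well as `H` with `u,x` identified are
planar), every proper coloring of the 4-cycle giving `u` and `x` the same color
extends to a proper 5-coloring of `H`. -/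
theorem extend_coloring_outer_four_cycle_same_opposite
    {W : Type} [DecidableEq W] (H : SimpleGraph W) (hpl : IsPlanar H)
    (u v x y : W)
    (huv : H.Adj u v) (hvx : H.Adj v x) (hxy : H.Adj x y) (hyu : H.Adj y u)
    (hux : ¬ H.Adj u x) (hvy : ¬ H.Adj v y) (hune : u ≠ x) (hvne : v ≠ y)
    (hmerge : IsPlanar (mergeVerts H u x))
    (c₀ : W → Fin 5) (hsame : c₀ u = c₀ x)
    (hcuv : c₀ u ≠ c₀ v) (hcuy : c₀ u ≠ c₀ y) :
    ∃ c : W → Fin 5, (∀ ⦃p q : W⦄, H.Adj p q → c p ≠ c q) ∧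
      c u = c₀ u ∧ c v = c₀ v ∧ c x = c₀ x ∧ c y = c₀ y := by
  have hM : ¬ K5Aux.Model (mergeVerts H u x) := fun h => hmerge.1 h.minor
  have hvx' := hvx.ne
  have hyx' := hxy.ne'
  have huv' := huv.ne
  have hyu' := hyu.ne
  have hn : ¬ (mergeVerts H u x).Adj v y := by
    rw [mergeVerts, SimpleGraph.fromRel_adj]
    rintro ⟨-, ⟨p, q, h1, h2, h3⟩ | ⟨p, q, h1, h2, h3⟩⟩
    · split_ifs at h2 h3 <;> grind
    · have h4 := h1.symm
      split_ifs at h2 h3 <;> grind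
  have hadj : ∀ p q, H.Adj p q →
      (mergeVerts H u x).Adj (if p = x then u else p) (if q = x then u else q) := by
    intro p q hpq
    rw [mergeVerts, SimpleGraph.fromRel_adj]
    refine ⟨?_, Or.inl ⟨p, q, hpq, rfl, rfl⟩⟩
    have := hpq.ne
    have := hpq.symm
    split_ifs <;> grind
  obtain ⟨c, hc, hcvy⟩ := K5Aux.color_all (mergeVerts H u x) hM v y hvne hn (c₀ v = c₀ y)
  have e1 : c u ≠ c v := by simpa [hune, hvx'] using hc _ _ (hadj u v huv)
  have e2 : c u ≠ c y := by simpa [hune, hyx'] using hc _ _ (hadj u y hyu.symm)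
  obtain ⟨σ, s1, s2, s3⟩ := K5Aux.exists_perm e1 e2 hcuv hcuy hcvy
  refine ⟨fun p => σ (c (if p = x then u else p)), ?_, ?_, ?_, ?_, ?_⟩
  · intro p q hpq h
    exact hc _ _ (hadj p q hpq) (σ.injective h)
  · simp [hune, s1]
  · simp [hvx', s2]
  · simp [s1, hsame]
  · simp [hyx', s3]
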